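/- Let G^i be a spray with coefficients N^i_j and let f : Ω → ℝ be smooth. Define ω_i = S(∂f/∂y^i) − ∂f/∂x^i. Then for all i, j on Ω: ∂ω_i/∂y^j = ∇(∂²f/∂y^j∂y^i) + δ/δx^j(∂f/∂y^i) − δ/δx^i(∂f/∂y^j), where ∇ is the dynamical covariant derivative applied to the family T_{ij} = ∂²f/∂y^i∂y^j. -/

import Mathlib

noncomputable section

/-- A point `(x, y)` of the tangent space coordinates over `ℝⁿ`. -/
abbrev Pt (n : ℕ) : Type := (Fin n → ℝ) × (Fin n → ℝ)

/-- `Ω = U × (ℝⁿ \ {0})`. -/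
def OmegaSet {n : ℕ} (U : Set (Fin n → ℝ)) : Set (Pt n) :=
  {p : Pt n | p.1 ∈ U ∧ p.2 ≠ 0}

/-- Partial derivative `∂f/∂x^i`. -/
def pdx {n : ℕ} (f : Pt n → ℝ) (i : Fin n) (p : Pt n) : ℝ :=
  fderiv ℝ f p (Pi.single i 1, 0)

/-- Partial derivative `∂f/∂y^i`. -/
def pdy {n : ℕ} (f : Pt n → ℝ) (i : Fin n) (p : Pt n) : ℝ :=
  fderiv ℝ f p (0, Pi.single i 1)

/-- Second fibre derivative `∂²f/∂y^i∂y^j`. -/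
def pdyy {n : ℕ} (f : Pt n → ℝ) (i j : Fin n) : Pt n → ℝ :=
  pdy (pdy f j) i

/-- The spray vector field applied to a function:
`S(f) = Σ_k (y^k ∂f/∂x^k − 2 G^k ∂f/∂y^k)`. -/
def Sop {n : ℕ} (G : Fin n → Pt n → ℝ) (f : Pt n → ℝ) (p : Pt n) : ℝ :=
  ∑ k, (p.2 k * pdx f k p - 2 * G k p * pdy f k p)

/-- Connection coefficients `N^i_j = ∂G^i/∂y^j`. -/
def Ncoef {n : ℕ} (G : Fin n → Pt n → ℝ) (i j : Fin n) : Pt n → ℝ :=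
  pdy (G i) j

/-- Horizontal derivative `δf/δx^i = ∂f/∂x^i − Σ_j N^j_i ∂f/∂y^j`. -/
def deltax {n : ℕ} (G : Fin n → Pt n → ℝ) (f : Pt n → ℝ) (i : Fin n) (p : Pt n) : ℝ :=
  pdx f i p - ∑ j, Ncoef G j i p * pdy f j p

/-- Dynamical covariant derivative of a `(0,2)` family:
`∇T_{ij} = S(T_{ij}) − Σ_k (N^k_i T_{kj} + N^k_j T_{ik})`. -/
def nablaT {n : ℕ} (G : Fin n → Pt n → ℝ) (T : Fin n → Fin n → Pt n → ℝ)
    (i j : Fin n) (p : Pt n) : ℝ :=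
  Sop G (T i j) p - ∑ k, (Ncoef G k i p * T k j p + Ncoef G k j p * T i k p)

/-- `f` is positively `k`-homogeneous in the fibre variable `y`, on `Ω`. -/
def PosHomog {n : ℕ} (U : Set (Fin n → ℝ)) (k : ℤ) (f : Pt n → ℝ) : Prop :=
  ∀ L : ℝ, 0 < L → ∀ p ∈ OmegaSet U, f (p.1, L • p.2) = L ^ k * f p

/-- A spray: smooth, positively 2-homogeneous coefficients `G^i`. -/
def IsSpray {n : ℕ} (U : Set (Fin n → ℝ)) (G : Fin n → Pt n → ℝ) : Prop :=
  ∀ i, ContDiffOn ℝ (⊤ : ℕ∞) (G i) (OmegaSet U) ∧ PosHomog U 2 (G i)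

/-- Components of the Euler-Lagrange 1-form: `(δ_S f)_i = S(∂f/∂y^i) − ∂f/∂x^i`. -/
def EL {n : ℕ} (G : Fin n → Pt n → ℝ) (f : Pt n → ℝ) (i : Fin n) (p : Pt n) : ℝ :=
  Sop G (pdy f i) p - pdx f i p

/-- The metric tensor `g_{ij} = ½ ∂²(F²)/∂y^i∂y^j` of a Finsler function. -/
def metricTensor {n : ℕ} (F : Pt n → ℝ) (i j : Fin n) (p : Pt n) : ℝ :=
  (1 / 2) * pdyy (fun q => F q ^ 2) i j p

/-- A Finsler structure on `U`: smooth, positive, positively 1-homogeneous,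
with invertible metric tensor at every point of `Ω`. -/
def IsFinsler {n : ℕ} (U : Set (Fin n → ℝ)) (F : Pt n → ℝ) : Prop :=
  ContDiffOn ℝ (⊤ : ℕ∞) F (OmegaSet U) ∧ (∀ p ∈ OmegaSet U, 0 < F p) ∧ PosHomog U 1 F ∧
    ∀ p ∈ OmegaSet U, IsUnit (Matrix.of (fun i j => metricTensor F i j p))

/-!
The fibre derivatives `∂/∂y^j` commute with all coordinate derivatives but not with `S`, because
the coefficients `y^k` and `-2 G^k` of `S` depend on `y`; differentiating them gives
`[∂/∂y^j, S] = ∂/∂x^j - 2 ∑ k, N^k_j ∂/∂y^k`. Applied to `∂f/∂y^i`, one copy of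
`∑ k, N^k_j ∂²f/∂y^k∂y^i` belongs to `∇` and the other to `δ/δx^j`, while the remaining
connection term of `∇` cancels the one of `δ/δx^i` by symmetry of `∂²f/∂y^i∂y^j`.
-/

section SecondDerivative

variable {𝕜 E F : Type*} [NontriviallyNormedField 𝕜] [NormedAddCommGroup E] [NormedSpace 𝕜 E]
  [NormedAddCommGroup F] [NormedSpace 𝕜 F] {f : E → F} {x : E}

lemma contDiffAt_fderiv_apply_const {m k : WithTop ℕ∞} (hf : ContDiffAt 𝕜 k f x)
    (hmk : m + 1 ≤ k) (v : E) : ContDiffAt 𝕜 m (fun z => fderiv 𝕜 f z v) x :=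
  (hf.fderiv_right hmk).clm_apply contDiffAt_const

lemma fderiv_fderiv_apply_comm (hf : ContDiffAt 𝕜 (minSmoothness 𝕜 2) f x) (v w : E) :
    fderiv 𝕜 (fun z => fderiv 𝕜 f z v) x w = fderiv 𝕜 (fun z => fderiv 𝕜 f z w) x v := by
  have hf' : DifferentiableAt 𝕜 (fderiv 𝕜 f) x :=
    (hf.fderiv_right (m := 1) le_minSmoothness).differentiableAt one_ne_zero
  rw [fderiv_clm_apply hf' (differentiableAt_const v),
    fderiv_clm_apply hf' (differentiableAt_const w)]
  simpa using (hf.isSymmSndFDerivAt le_rfl).eq w v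

end SecondDerivative

lemma isOpen_OmegaSet {n : ℕ} {U : Set (Fin n → ℝ)} (hU : IsOpen U) : IsOpen (OmegaSet U) :=
  (hU.preimage continuous_fst).inter (isOpen_ne_fun continuous_snd continuous_const)

section PartialDerivatives

variable {n : ℕ} {g h : Pt n → ℝ} {p : Pt n}

lemma contDiffAt_pdx {m k : WithTop ℕ∞} (hg : ContDiffAt ℝ k g p) (hmk : m + 1 ≤ k) (i : Fin n) :
    ContDiffAt ℝ m (pdx g i) p :=
  contDiffAt_fderiv_apply_const hg hmk _

lemma contDiffAt_pdy {m k : WithTop ℕ∞} (hg : ContDiffAt ℝ k g p) (hmk : m + 1 ≤ k) (i : Fin n) :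
    ContDiffAt ℝ m (pdy g i) p :=
  contDiffAt_fderiv_apply_const hg hmk _

lemma differentiableAt_pdx (hg : ContDiffAt ℝ 2 g p) (i : Fin n) :
    DifferentiableAt ℝ (pdx g i) p :=
  (contDiffAt_pdx (m := 1) hg one_add_one_eq_two.le i).differentiableAt one_ne_zero

lemma differentiableAt_pdy (hg : ContDiffAt ℝ 2 g p) (i : Fin n) :
    DifferentiableAt ℝ (pdy g i) p :=
  (contDiffAt_pdy (m := 1) hg one_add_one_eq_two.le i).differentiableAt one_ne_zero

lemma pdy_pdx_comm (hg : ContDiffAt ℝ 2 g p) (i j : Fin n) :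
    pdy (pdx g i) j p = pdx (pdy g j) i p :=
  fderiv_fderiv_apply_comm (by simpa using hg) _ _

lemma pdy_pdy_comm (hg : ContDiffAt ℝ 2 g p) (i j : Fin n) :
    pdy (pdy g i) j p = pdy (pdy g j) i p :=
  fderiv_fderiv_apply_comm (by simpa using hg) _ _

lemma pdy_sub (hg : DifferentiableAt ℝ g p) (hh : DifferentiableAt ℝ h p) (j : Fin n) :
    pdy (fun q => g q - h q) j p = pdy g j p - pdy h j p := by
  simp only [pdy, fderiv_fun_sub hg hh, sub_apply]

lemma pdy_mul (hg : DifferentiableAt ℝ g p) (hh : DifferentiableAt ℝ h p) (j : Fin n) :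
    pdy (fun q => g q * h q) j p = pdy g j p * h p + g p * pdy h j p := by
  simp only [pdy, fderiv_fun_mul hg hh, add_apply, smul_apply, smul_eq_mul]
  ring

lemma pdy_const_mul (hg : DifferentiableAt ℝ g p) (c : ℝ) (j : Fin n) :
    pdy (fun q => c * g q) j p = c * pdy g j p := by
  simp only [pdy, fderiv_const_mul hg, smul_apply, smul_eq_mul]

lemma pdy_sum {ι : Type*} {s : Finset ι} {u : ι → Pt n → ℝ}
    (hu : ∀ k ∈ s, DifferentiableAt ℝ (u k) p) (j : Fin n) :
    pdy (fun q => ∑ k ∈ s, u k q) j p = ∑ k ∈ s, pdy (u k) j p := by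
  simp only [pdy, fderiv_fun_sum hu, sum_apply]

lemma pdy_fibre_coord (k j : Fin n) :
    pdy (fun q : Pt n => q.2 k) j p = if k = j then 1 else 0 := by
  let coord : Pt n →L[ℝ] ℝ := (ContinuousLinearMap.proj k).comp (ContinuousLinearMap.snd ℝ _ _)
  calc pdy coord j p = coord (0, Pi.single j 1) := by rw [pdy, coord.fderiv]
    _ = if k = j then 1 else 0 := Pi.single_apply j 1 k

end PartialDerivatives

section Spray

variable {n : ℕ} {G : Fin n → Pt n → ℝ} {g : Pt n → ℝ} {p : Pt n}

lemma differentiableAt_Sop_summand {H : Pt n → ℝ} (hH : DifferentiableAt ℝ H p)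
    (hg : ContDiffAt ℝ 2 g p) (k : Fin n) :
    DifferentiableAt ℝ (fun q => q.2 k * pdx g k q - 2 * H q * pdy g k q) p := by
  have hgx := differentiableAt_pdx hg k
  have hgy := differentiableAt_pdy hg k
  fun_prop

lemma differentiableAt_Sop (hG : ∀ k, DifferentiableAt ℝ (G k) p) (hg : ContDiffAt ℝ 2 g p) :
    DifferentiableAt ℝ (Sop G g) p :=
  DifferentiableAt.fun_sum fun k _ => differentiableAt_Sop_summand (hG k) hg k

lemma pdy_Sop_summand {H : Pt n → ℝ} (hH : DifferentiableAt ℝ H p) (hg : ContDiffAt ℝ 2 g p)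
    (j k : Fin n) :
    pdy (fun q => q.2 k * pdx g k q - 2 * H q * pdy g k q) j p
      = (p.2 k * pdx (pdy g j) k p - 2 * H p * pdy (pdy g j) k p)
        + (if k = j then pdx g k p else 0) - 2 * (pdy H j p * pdy g k p) := by
  have hy : DifferentiableAt ℝ (fun q : Pt n => q.2 k) p := by fun_prop
  have hgx := differentiableAt_pdx hg k
  have hgy := differentiableAt_pdy hg k
  rw [pdy_sub (hy.fun_mul hgx) ((hH.const_mul 2).fun_mul hgy), pdy_mul hy hgx,
    pdy_mul (hH.const_mul 2) hgy, pdy_const_mul hH, pdy_fibre_coord, pdy_pdx_comm hg,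
    pdy_pdy_comm hg, ite_mul, one_mul, zero_mul]
  ring

lemma pdy_Sop (hG : ∀ k, DifferentiableAt ℝ (G k) p) (hg : ContDiffAt ℝ 2 g p) (j : Fin n) :
    pdy (Sop G g) j p
      = Sop G (pdy g j) p + pdx g j p - 2 * ∑ k, Ncoef G k j p * pdy g k p := by
  calc pdy (Sop G g) j p
      = ∑ k, pdy (fun q => q.2 k * pdx g k q - 2 * G k q * pdy g k q) j p :=
        pdy_sum (fun k _ => differentiableAt_Sop_summand (hG k) hg k) j
    _ = ∑ k, ((p.2 k * pdx (pdy g j) k p - 2 * G k p * pdy (pdy g j) k p)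
          + (if k = j then pdx g k p else 0) - 2 * (pdy (G k) j p * pdy g k p)) :=
        Finset.sum_congr rfl fun k _ => pdy_Sop_summand (hG k) hg j k
    _ = Sop G (pdy g j) p + pdx g j p - 2 * ∑ k, Ncoef G k j p * pdy g k p := by
        rw [Finset.sum_sub_distrib, Finset.sum_add_distrib, ← Finset.mul_sum,
          Fintype.sum_ite_eq']
        rfl

lemma pdy_EL {f : Pt n → ℝ} (hG : ∀ k, DifferentiableAt ℝ (G k) p) (hf : ContDiffAt ℝ 3 f p)
    (i j : Fin n) :
    pdy (EL G f i) j p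
      = Sop G (pdyy f j i) p + pdx (pdy f i) j p - 2 * ∑ k, Ncoef G k j p * pdyy f k i p
        - pdx (pdy f j) i p := by
  have hf₂ : ContDiffAt ℝ 2 f p := hf.of_le (by norm_num)
  have hfi : ContDiffAt ℝ 2 (pdy f i) p := contDiffAt_pdy hf (by norm_num) i
  calc pdy (EL G f i) j p
      = pdy (Sop G (pdy f i)) j p - pdy (pdx f i) j p :=
        pdy_sub (differentiableAt_Sop hG hfi) (differentiableAt_pdx hf₂ i) j
    _ = Sop G (pdyy f j i) p + pdx (pdy f i) j p - 2 * ∑ k, Ncoef G k j p * pdyy f k i p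
          - pdx (pdy f j) i p := by
        rw [pdy_Sop hG hfi, pdy_pdx_comm hf₂]
        rfl

end Spray

theorem statement1_general {n : ℕ} {G : Fin n → Pt n → ℝ} {f : Pt n → ℝ} {p : Pt n}
    (hG : ∀ k, DifferentiableAt ℝ (G k) p) (hf : ContDiffAt ℝ 3 f p) (i j : Fin n) :
    pdy (EL G f i) j p
      = nablaT G (pdyy f) j i p + deltax G (pdy f i) j p - deltax G (pdy f j) i p := by
  have pdyy_comm (k : Fin n) : pdyy f j k p = pdyy f k j p :=
    pdy_pdy_comm (hf.of_le (by norm_num)) k j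
  rw [pdy_EL hG hf]
  simp only [nablaT, deltax, pdyy_comm, Finset.sum_add_distrib]
  simp only [pdyy]
  ring

/-- with `ω_i = S(∂f/∂y^i) − ∂f/∂x^i`, one has
`∂ω_i/∂y^j = ∇(∂²f/∂y^j∂y^i) + δ/δx^j(∂f/∂y^i) − δ/δx^i(∂f/∂y^j)` on `Ω`. -/
theorem statement1 {n : ℕ} (hn : 1 ≤ n) (U : Set (Fin n → ℝ)) (hU : IsOpen U)
    (G : Fin n → Pt n → ℝ) (hG : IsSpray U G)
    (f : Pt n → ℝ) (hf : ContDiffOn ℝ (⊤ : ℕ∞) f (OmegaSet U)) :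
    ∀ i j, ∀ p ∈ OmegaSet U,
      pdy (EL G f i) j p
        = nablaT G (pdyy f) j i p + deltax G (pdy f i) j p - deltax G (pdy f j) i p := by
  intro i j p hp
  have hΩ : OmegaSet U ∈ nhds p := (isOpen_OmegaSet hU).mem_nhds hp
  exact statement1_general (fun k => ((hG k).1.contDiffAt hΩ).differentiableAt (by simp))
    (contDiffAt_infty.1 (hf.contDiffAt hΩ) 3) i j
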